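/- (Theorem 4.1(ii), chamber C₂₁₃.) Uniformly over all λ ∈ C⁺ and all X ∈ a with x2 ≥ x1 ≥ x3, one has E_k(X,λ) ≍ e^{⟨λ,X⁺⟩} / [ (1+α_λ α_{X⁺})^{k+1} (1+β_λ β_{X⁺})^{k} (1+γ_λ γ_{X⁺})^{k} ]. -/

import Mathlib

open Real MeasureTheory

/-- The rank-one Dunkl kernel `E_k^{rk1}(x,v)`. -/
noncomputable def Erk1 (k x v : ℝ) : ℝ :=
  (Real.Gamma (k + 1/2) / (Real.sqrt Real.pi * Real.Gamma k)) *
    ∫ z in (-1 : ℝ)..1, Real.exp (z * x * v) * (1 - z) ^ (k - 1) * (1 + z) ^ k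

/-- The normalized modified Bessel function `𝒥_a(y)`, for `a > -1/2`. -/
noncomputable def besselJ (a y : ℝ) : ℝ :=
  (Real.Gamma (a + 1) / (Real.sqrt Real.pi * Real.Gamma (a + 1/2))) *
    ∫ z in (-1 : ℝ)..1, Real.exp (y * z) * (1 - z ^ 2) ^ (a - 1/2)

/-- `W_k(λ,ν)`. -/
noncomputable def Wk (k l1 l2 l3 n1 n2 : ℝ) : ℝ :=
  ((l1 - n1) * (l1 - n2) * (n1 - l2) * (l2 - n2) * (n1 - l3) * (n2 - l3)) ^ (k - 1)

/-- `V(λ) = (λ1-λ2)(λ1-λ3)(λ2-λ3)`. -/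
def Vlam (l1 l2 l3 : ℝ) : ℝ := (l1 - l2) * (l1 - l3) * (l2 - l3)

/-- The `A₂` Dunkl kernel `E_k(X,λ)`, defined via the rank-one kernel formula. -/
noncomputable def EkA2 (k x1 x2 x3 l1 l2 l3 : ℝ) : ℝ :=
  (3 * Real.Gamma (3 * k) / (Vlam l1 l2 l3 ^ (2 * k) * Real.Gamma k ^ 2)) *
    ∫ n2 in l3..l2, ∫ n1 in l2..l1,
      ((n1 - l2) * (l1 - n2) * Erk1 k ((x1 - x2) / 2) (n1 - n2)
        + (l1 - n1) * (l2 - n2) * Erk1 k (-(x1 - x2) / 2) (n1 - n2))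
      * ((n1 - l3) * (n2 - l3)) * Real.exp ((x1 + x2 - 2 * x3) * (n1 + n2) / 2)
      * Wk k l1 l2 l3 n1 n2

lemma poly_exp (p c : ℝ) (hp : 0 < p) (hc : 0 < c) :
    ∃ C : ℝ, 0 < C ∧ ∀ y : ℝ, 0 ≤ y → (1 + y) ^ p ≤ C * Real.exp (c * y) := by
  set K := max 1 (p / c) with hK
  have hK1 : 1 ≤ K := le_max_left _ _
  have hK2 : p / c ≤ K := le_max_right _ _
  refine ⟨K ^ p, by positivity, fun y hy => ?_⟩
  have h1 : 1 + y ≤ K * Real.exp (c * y / p) := by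
    have h2 : c * y / p + 1 ≤ Real.exp (c * y / p) := Real.add_one_le_exp _
    have h3 : y ≤ K * (c * y / p) := by
      have : p / c * (c * y / p) = y := by field_simp
      nlinarith [mul_le_mul_of_nonneg_right hK2 (show 0 ≤ c * y / p by positivity)]
    nlinarith
  calc (1 + y) ^ p ≤ (K * Real.exp (c * y / p)) ^ p :=
        Real.rpow_le_rpow (by linarith) h1 hp.le
    _ = K ^ p * Real.exp (c * y) := by
        rw [Real.mul_rpow (by positivity) (by positivity), ← Real.exp_mul]
        congr 2
        field_simp

lemma ii_mono {f g : ℝ → ℝ} {a b : ℝ} (hab : a ≤ b) (hg : IntervalIntegrable g volume a b)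
    (hf : Measurable f) (h : ∀ x ∈ Set.Ioo a b, 0 ≤ f x ∧ f x ≤ g x) :
    IntervalIntegrable f volume a b := by
  rw [intervalIntegrable_iff_integrableOn_Ioo_of_le hab] at hg ⊢
  refine Integrable.mono' hg hf.aestronglyMeasurable ?_
  refine (ae_restrict_iff' measurableSet_Ioo).mpr (Filter.Eventually.of_forall fun x hx => ?_)
  rw [Real.norm_of_nonneg (h x hx).1]
  exact (h x hx).2

lemma half_rpow (r x : ℝ) (h1 : 1 / 2 ≤ x) (h2 : x ≤ 1) :
    (2 ^ |r|)⁻¹ ≤ x ^ r ∧ x ^ r ≤ (2 : ℝ) ^ |r| := by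
  have hx : 0 < x := by linarith
  have e : ∀ q : ℝ, x ^ q ≤ (2 : ℝ) ^ |q| := by
    intro q
    calc x ^ q ≤ x ^ (-|q|) := Real.rpow_le_rpow_of_exponent_ge hx h2 (neg_abs_le q)
      _ = (x⁻¹) ^ |q| := by rw [Real.rpow_neg hx.le, Real.inv_rpow hx.le]
      _ ≤ 2 ^ |q| := by
        apply Real.rpow_le_rpow (by positivity) _ (abs_nonneg _)
        rw [inv_le_comm₀ hx (by norm_num)]; linarith
  refine ⟨?_, e r⟩
  have := e (-r)
  rw [abs_neg, Real.rpow_neg hx.le] at this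
  rw [inv_le_comm₀ (by positivity) (by positivity)]
  exact this

lemma beta_ii (p q : ℝ) (hp : 0 < p) (hq : 0 < q) :
    IntervalIntegrable (fun u : ℝ => u ^ (p - 1) * (1 - u) ^ (q - 1)) volume 0 1 := by
  have h := (Complex.betaIntegral_convergent (u := (p : ℂ)) (v := (q : ℂ)) (by simpa) (by simpa)).norm
  refine ii_mono zero_le_one h (by fun_prop) ?_
  intro x hx
  have h1 : 0 < 1 - x := by linarith [hx.2]
  have h0 := hx.1
  refine ⟨by positivity, le_of_eq ?_⟩
  rw [norm_mul]
  have e1 : ‖(x : ℂ) ^ ((p : ℂ) - 1)‖ = x ^ (p - 1) := by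
    rw [Complex.norm_cpow_eq_rpow_re_of_pos h0]; simp
  have e2 : ‖(1 - (x : ℂ)) ^ ((q : ℂ) - 1)‖ = (1 - x) ^ (q - 1) := by
    rw [show (1 - (x : ℂ)) = ((1 - x : ℝ) : ℂ) by push_cast; rfl,
      Complex.norm_cpow_eq_rpow_re_of_pos h1]; simp
  rw [e1, e2]

lemma J1_ii (p q y : ℝ) (hp : 0 < p) (hq : 0 < q) (hy : 0 ≤ y) :
    IntervalIntegrable (fun u : ℝ => Real.exp (-(y * u)) * u ^ (p - 1) * (1 - u) ^ (q - 1))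
      volume 0 1 := by
  refine ii_mono zero_le_one (beta_ii p q hp hq) (by fun_prop) ?_
  intro x hx
  have h1 : 0 < 1 - x := by linarith [hx.2]
  have h0 := hx.1
  refine ⟨by positivity, ?_⟩
  rw [mul_assoc]
  apply mul_le_of_le_one_left (by positivity)
  apply Real.exp_le_one_iff.mpr
  have : 0 ≤ y * x := by positivity
  linarith

lemma J1_upper (p q : ℝ) (hp : 0 < p) (hq : 0 < q) :
    ∃ C : ℝ, 0 < C ∧ ∀ y : ℝ, 0 ≤ y →
      ∫ u in (0:ℝ)..1, Real.exp (-(y * u)) * u ^ (p - 1) * (1 - u) ^ (q - 1) ≤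
        C * ((1 + y) ^ p)⁻¹ := by
  obtain ⟨K, hK, hKy⟩ := poly_exp p (1/2) hp (by norm_num)
  set B := ∫ u in (0:ℝ)..1, u ^ (p - 1) * (1 - u) ^ (q - 1) with hB
  have hB0 : 0 ≤ B := by
    apply intervalIntegral.integral_nonneg zero_le_one
    intro u hu
    have h1 : 0 ≤ 1 - u := by linarith [hu.2]
    have h0 := hu.1
    positivity
  have hG : 0 < Real.Gamma p := Real.Gamma_pos_of_pos hp
  refine ⟨2 ^ |q - 1| * Real.exp 1 * Real.Gamma p + K * B, by positivity, fun y hy => ?_⟩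
  have hy1 : 0 < 1 + y := by linarith
  have hE : IntegrableOn (fun u : ℝ => u ^ (p - 1) * Real.exp (-((1 + y) * u))) (Set.Ioi 0) := by
    have := integrableOn_rpow_mul_exp_neg_mul_rpow (p := 1) (s := p - 1) (b := 1 + y)
      (by linarith) one_pos hy1
    refine this.congr_fun (fun x hx => ?_) measurableSet_Ioi
    simp only [Real.rpow_one, neg_mul]
  have hE2 : ∫ u in (0:ℝ)..1, u ^ (p - 1) * Real.exp (-((1 + y) * u)) ≤
      ((1 + y) ^ p)⁻¹ * Real.Gamma p := by
    have := Real.integral_rpow_mul_exp_neg_mul_Ioi hp hy1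
    rw [one_div, Real.inv_rpow hy1.le] at this
    rw [← this, intervalIntegral.integral_of_le zero_le_one]
    apply setIntegral_mono_set hE
    · refine (ae_restrict_iff' measurableSet_Ioi).mpr (Filter.Eventually.of_forall fun x hx => ?_)
      have hx' : 0 < x := hx
      simp only [Pi.zero_apply]
      positivity
    · exact Filter.Eventually.of_forall fun x hx => hx.1
  have hEi : IntervalIntegrable (fun u : ℝ => u ^ (p - 1) * Real.exp (-((1 + y) * u))) volume 0 1 := by
    rw [intervalIntegrable_iff_integrableOn_Ioo_of_le zero_le_one]
    exact hE.mono_set fun x hx => hx.1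
  calc ∫ u in (0:ℝ)..1, Real.exp (-(y * u)) * u ^ (p - 1) * (1 - u) ^ (q - 1)
      ≤ ∫ u in (0:ℝ)..1, ((2 ^ |q - 1| * Real.exp 1) * (u ^ (p - 1) * Real.exp (-((1 + y) * u)))
          + (K * ((1 + y) ^ p)⁻¹) * (u ^ (p - 1) * (1 - u) ^ (q - 1))) := by
        apply intervalIntegral.integral_mono_on_of_le_Ioo zero_le_one (J1_ii p q y hp hq hy)
          ((hEi.const_mul _).add ((beta_ii p q hp hq).const_mul _))
        intro u hu
        have h1 : 0 < 1 - u := by linarith [hu.2]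
        have h0 := hu.1
        rcases le_total u (1/2) with h | h
        · have a1 := (half_rpow (q - 1) (1 - u) (by linarith) (by linarith)).2
          have a2 : Real.exp (-(y * u)) ≤ Real.exp 1 * Real.exp (-((1 + y) * u)) := by
            rw [← Real.exp_add]; apply Real.exp_le_exp.mpr; nlinarith
          have a3 : 0 ≤ (K * ((1 + y) ^ p)⁻¹) * (u ^ (p - 1) * (1 - u) ^ (q - 1)) := by positivity
          calc _ ≤ (Real.exp 1 * Real.exp (-((1 + y) * u))) * u ^ (p - 1) * 2 ^ |q - 1| := by
                gcongr
            _ = (2 ^ |q - 1| * Real.exp 1) * (u ^ (p - 1) * Real.exp (-((1 + y) * u))) := by ring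
            _ ≤ _ := by linarith
        · have a1 : Real.exp (-(y * u)) ≤ K * ((1 + y) ^ p)⁻¹ := by
            have b1 := hKy y hy
            have b2 : Real.exp (-(y * u)) ≤ Real.exp (-(1/2 * y)) := by
              apply Real.exp_le_exp.mpr; nlinarith
            refine b2.trans ?_
            rw [Real.exp_neg, ← div_eq_mul_inv, le_div_iff₀ (by positivity),
              inv_mul_le_iff₀ (by positivity)]
            linarith
          have a3 : 0 ≤ (2 ^ |q - 1| * Real.exp 1) * (u ^ (p - 1) * Real.exp (-((1 + y) * u))) := by
            positivity
          calc _ = Real.exp (-(y * u)) * (u ^ (p - 1) * (1 - u) ^ (q - 1)) := by ring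
            _ ≤ (K * ((1 + y) ^ p)⁻¹) * (u ^ (p - 1) * (1 - u) ^ (q - 1)) := by gcongr
            _ ≤ _ := by linarith
    _ = (2 ^ |q - 1| * Real.exp 1) * (∫ u in (0:ℝ)..1, u ^ (p - 1) * Real.exp (-((1 + y) * u)))
          + (K * ((1 + y) ^ p)⁻¹) * B := by
        rw [intervalIntegral.integral_add (hEi.const_mul _) ((beta_ii p q hp hq).const_mul _),
          intervalIntegral.integral_const_mul, intervalIntegral.integral_const_mul]
    _ ≤ (2 ^ |q - 1| * Real.exp 1) * (((1 + y) ^ p)⁻¹ * Real.Gamma p)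
          + (K * ((1 + y) ^ p)⁻¹) * B := by gcongr
    _ = _ := by ring

lemma J1_lower (p q : ℝ) (hp : 0 < p) (hq : 0 < q) :
    ∃ C : ℝ, 0 < C ∧ ∀ y : ℝ, 0 ≤ y →
      C * ((1 + y) ^ p)⁻¹ ≤
      ∫ u in (0:ℝ)..1, Real.exp (-(y * u)) * u ^ (p - 1) * (1 - u) ^ (q - 1) := by
  refine ⟨Real.exp (-1) * (2 ^ |q - 1|)⁻¹ * ((2 ^ p)⁻¹ / p), by positivity, fun y hy => ?_⟩
  have hy1 : 0 < 1 + y := by linarith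
  set d := 1 / (2 * (1 + y)) with hd
  have hd0 : 0 < d := by positivity
  have hd2 : d ≤ 1 / 2 := by
    rw [hd]; apply one_div_le_one_div_of_le <;> linarith
  have hdy : y * d ≤ 1 := by
    rw [hd, mul_one_div, div_le_one (by positivity)]; linarith
  have hri : IntervalIntegrable (fun u : ℝ => u ^ (p - 1)) volume 0 d :=
    intervalIntegral.intervalIntegrable_rpow' (by linarith)
  have hJ := J1_ii p q y hp hq hy
  calc _ = ∫ u in (0:ℝ)..d, (Real.exp (-1) * (2 ^ |q - 1|)⁻¹) * u ^ (p - 1) := by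
        rw [intervalIntegral.integral_const_mul, integral_rpow (Or.inl (by linarith))]
        rw [sub_add_cancel, Real.zero_rpow hp.ne', hd, Real.div_rpow zero_le_one (by positivity),
          Real.mul_rpow (by norm_num) hy1.le, Real.one_rpow]
        field_simp
        ring
    _ ≤ ∫ u in (0:ℝ)..d, Real.exp (-(y * u)) * u ^ (p - 1) * (1 - u) ^ (q - 1) := by
        apply intervalIntegral.integral_mono_on_of_le_Ioo hd0.le (hri.const_mul _)
        · apply hJ.mono_set
          rw [Set.uIcc_of_le hd0.le, Set.uIcc_of_le zero_le_one]
          exact Set.Icc_subset_Icc le_rfl (by linarith)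
        · intro u hu
          have h0 := hu.1
          have hud := hu.2
          have a1 := (half_rpow (q - 1) (1 - u) (by linarith) (by linarith)).1
          have a2 : Real.exp (-1) ≤ Real.exp (-(y * u)) := by
            apply Real.exp_le_exp.mpr
            nlinarith
          calc _ = Real.exp (-1) * u ^ (p - 1) * (2 ^ |q - 1|)⁻¹ := by ring
            _ ≤ _ := by gcongr
    _ ≤ _ := by
        apply intervalIntegral.integral_mono_interval le_rfl hd0.le (by linarith) _ hJ
        refine (ae_restrict_iff' measurableSet_Ioc).mpr (Filter.Eventually.of_forall fun x hx => ?_)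
        have h1 : 0 ≤ 1 - x := by linarith [hx.2]
        have h0 := hx.1
        simp only [Pi.zero_apply]
        positivity

lemma J_scale (p q a M : ℝ) (ha : 0 < a) :
    ∫ s in (0:ℝ)..a, Real.exp (-(M * s)) * s ^ (p - 1) * (a - s) ^ (q - 1) =
      a ^ (p + q - 1) *
      ∫ u in (0:ℝ)..1, Real.exp (-((a * M) * u)) * u ^ (p - 1) * (1 - u) ^ (q - 1) := by
  have h := intervalIntegral.mul_integral_comp_mul_left (a := 0) (b := 1) (c := a)
    (f := fun s => Real.exp (-(M * s)) * s ^ (p - 1) * (a - s) ^ (q - 1))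
  rw [mul_zero, mul_one] at h
  rw [← h, ← intervalIntegral.integral_const_mul, ← intervalIntegral.integral_const_mul]
  apply intervalIntegral.integral_congr
  intro u hu
  rw [Set.uIcc_of_le zero_le_one] at hu
  have h1 : 0 ≤ 1 - u := by linarith [hu.2]
  have h0 := hu.1
  simp only
  rw [show a - a * u = a * (1 - u) by ring, Real.mul_rpow ha.le h0, Real.mul_rpow ha.le h1,
    show M * (a * u) = a * M * u by ring,
    show p + q - 1 = 1 + (p - 1) + (q - 1) by ring, Real.rpow_add ha, Real.rpow_add ha,
    Real.rpow_one]
  ring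

lemma J_ii (p q a M : ℝ) (hp : 0 < p) (hq : 0 < q) (ha : 0 < a) (hM : 0 ≤ M) :
    IntervalIntegrable (fun s : ℝ => Real.exp (-(M * s)) * s ^ (p - 1) * (a - s) ^ (q - 1))
      volume 0 a := by
  have h := ((J1_ii p q (a * M) hp hq (by positivity)).comp_mul_left (c := a⁻¹)).const_mul
    (a ^ (p + q - 2))
  rw [zero_div, one_div, inv_inv] at h
  refine ii_mono ha.le h (by fun_prop) ?_
  intro x hx
  have h1 : 0 < a - x := by linarith [hx.2]
  have h0 := hx.1
  refine ⟨by positivity, le_of_eq ?_⟩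
  rw [show (1 - a⁻¹ * x) = a⁻¹ * (a - x) by field_simp,
    Real.mul_rpow (by positivity) h0.le, Real.mul_rpow (by positivity) h1.le,
    show a * M * (a⁻¹ * x) = M * x by field_simp,
    show p + q - 2 = (p - 1) + (q - 1) by ring, Real.rpow_add ha, Real.inv_rpow ha.le,
    Real.inv_rpow ha.le]
  have e1 : a ^ (p - 1) ≠ 0 := by positivity
  have e2 : a ^ (q - 1) ≠ 0 := by positivity
  field_simp

lemma J_upper (p q : ℝ) (hp : 0 < p) (hq : 0 < q) :
    ∃ C : ℝ, 0 < C ∧ ∀ a M : ℝ, 0 < a → 0 ≤ M →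
      ∫ s in (0:ℝ)..a, Real.exp (-(M / 2 * s)) * s ^ (p - 1) * (a - s) ^ (q - 1) ≤
        C * (a ^ (p + q - 1) * ((1 + a * M) ^ p)⁻¹) := by
  obtain ⟨C, hC, h⟩ := J1_upper p q hp hq
  refine ⟨C * 2 ^ p, by positivity, fun a M ha hM => ?_⟩
  rw [J_scale _ _ _ _ ha]
  have h1 := h (a * (M / 2)) (by positivity)
  have h2 : ((1 + a * (M / 2)) ^ p)⁻¹ ≤ 2 ^ p * ((1 + a * M) ^ p)⁻¹ := by
    rw [← inv_inv ((2:ℝ) ^ p), ← mul_inv, ← Real.inv_rpow (show (0:ℝ) ≤ 2 by norm_num),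
      ← Real.mul_rpow (by norm_num) (by positivity)]
    apply inv_anti₀ (by positivity)
    apply Real.rpow_le_rpow (by positivity) _ hp.le
    linarith
  calc _ ≤ a ^ (p + q - 1) * (C * (2 ^ p * ((1 + a * M) ^ p)⁻¹)) := by
        gcongr; exact h1.trans (by gcongr)
    _ = _ := by ring

lemma rk1_pos_eq (k y x v : ℝ) (hy : x * v = y) :
    ∫ z in (-1 : ℝ)..1, Real.exp (z * x * v) * (1 - z) ^ (k - 1) * (1 + z) ^ k =
      Real.exp y * ∫ s in (0:ℝ)..2, Real.exp (-(y * s)) * s ^ (k - 1) * (2 - s) ^ (k + 1 - 1) := by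
  have h := intervalIntegral.integral_comp_sub_left (a := 0) (b := 2)
    (fun z => Real.exp (z * x * v) * (1 - z) ^ (k - 1) * (1 + z) ^ k) 1
  rw [show (1:ℝ) - 2 = -1 by norm_num, sub_zero] at h
  rw [← h, ← intervalIntegral.integral_const_mul]
  apply intervalIntegral.integral_congr
  intro s hs
  simp only
  rw [← hy, show (1 - s) * x * v = x * v + -(x * v * s) by ring, Real.exp_add]
  rw [show 1 - (1 - s) = s by ring, show 1 + (1 - s) = 2 - s by ring, add_sub_cancel_right]
  ring

lemma rk1_neg_eq (k y x v : ℝ) (hy : x * v = y) :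
    ∫ z in (-1 : ℝ)..1, Real.exp (z * (-x) * v) * (1 - z) ^ (k - 1) * (1 + z) ^ k =
      Real.exp y * ∫ s in (0:ℝ)..2, Real.exp (-(y * s)) * s ^ (k + 1 - 1) * (2 - s) ^ (k - 1) := by
  have h := intervalIntegral.integral_comp_sub_right (a := 0) (b := 2)
    (fun z => Real.exp (z * (-x) * v) * (1 - z) ^ (k - 1) * (1 + z) ^ k) 1
  rw [show (2:ℝ) - 1 = 1 by norm_num, zero_sub] at h
  rw [← h, ← intervalIntegral.integral_const_mul]
  apply intervalIntegral.integral_congr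
  intro s hs
  simp only
  rw [← hy, show (s - 1) * -x * v = x * v + -(x * v * s) by ring, Real.exp_add]
  rw [show 1 - (s - 1) = 2 - s by ring, show 1 + (s - 1) = s by ring, add_sub_cancel_right]
  ring

lemma rk1_gen (k p q : ℝ) (hk : 0 < k) (hp : 0 < p) (hq : 0 < q) :
    ∃ c C : ℝ, 0 < c ∧ 0 < C ∧ ∀ y : ℝ, 0 ≤ y →
      c * (Real.exp y * ((1 + 2 * y) ^ p)⁻¹) ≤
        (Real.Gamma (k + 1/2) / (Real.sqrt Real.pi * Real.Gamma k)) *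
        (Real.exp y * ∫ s in (0:ℝ)..2, Real.exp (-(y * s)) * s ^ (p - 1) * (2 - s) ^ (q - 1)) ∧
      (Real.Gamma (k + 1/2) / (Real.sqrt Real.pi * Real.Gamma k)) *
        (Real.exp y * ∫ s in (0:ℝ)..2, Real.exp (-(y * s)) * s ^ (p - 1) * (2 - s) ^ (q - 1)) ≤
      C * (Real.exp y * ((1 + 2 * y) ^ p)⁻¹) := by
  obtain ⟨c, hc, h1⟩ := J1_lower p q hp hq
  obtain ⟨C, hC, h2⟩ := J1_upper p q hp hq
  have hg : 0 < Real.Gamma (k + 1/2) / (Real.sqrt Real.pi * Real.Gamma k) := by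
    have := Real.Gamma_pos_of_pos hk
    have := Real.Gamma_pos_of_pos (show 0 < k + 1/2 by linarith)
    have := Real.pi_pos
    positivity
  set g := Real.Gamma (k + 1/2) / (Real.sqrt Real.pi * Real.Gamma k)
  refine ⟨g * 2 ^ (p + q - 1) * c, g * 2 ^ (p + q - 1) * C, by positivity, by positivity,
    fun y hy => ?_⟩
  rw [J_scale p q 2 y (by norm_num)]
  have a1 := h1 (2 * y) (by positivity)
  have a2 := h2 (2 * y) (by positivity)
  constructor
  · calc _ = g * (Real.exp y * (2 ^ (p + q - 1) * (c * ((1 + 2 * y) ^ p)⁻¹))) := by ring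
      _ ≤ _ := by gcongr
  · calc _ ≤ g * (Real.exp y * (2 ^ (p + q - 1) * (C * ((1 + 2 * y) ^ p)⁻¹))) := by gcongr
      _ = _ := by ring

lemma rk1_est (k : ℝ) (hk : 0 < k) :
    ∃ c C : ℝ, 0 < c ∧ 0 < C ∧ ∀ x v : ℝ, 0 ≤ x → 0 ≤ v →
      (c * (Real.exp (x * v / 2) * ((1 + x * v) ^ k)⁻¹) ≤ Erk1 k (x / 2) v ∧
       Erk1 k (x / 2) v ≤ C * (Real.exp (x * v / 2) * ((1 + x * v) ^ k)⁻¹)) ∧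
      (c * (Real.exp (x * v / 2) * ((1 + x * v) ^ (k + 1))⁻¹) ≤ Erk1 k (-(x / 2)) v ∧
       Erk1 k (-(x / 2)) v ≤ C * (Real.exp (x * v / 2) * ((1 + x * v) ^ (k + 1))⁻¹)) := by
  obtain ⟨c1, C1, hc1, hC1, h1⟩ := rk1_gen k k (k + 1) hk hk (by linarith)
  obtain ⟨c2, C2, hc2, hC2, h2⟩ := rk1_gen k (k + 1) k hk (by linarith) hk
  refine ⟨min c1 c2, max C1 C2, by positivity, by positivity, fun x v hx hv => ?_⟩
  have a1 := h1 (x * v / 2) (by positivity)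
  have a2 := h2 (x * v / 2) (by positivity)
  rw [show 2 * (x * v / 2) = x * v by ring] at a1 a2
  unfold Erk1
  rw [rk1_pos_eq k (x * v / 2) (x / 2) v (by ring), rk1_neg_eq k (x * v / 2) (x / 2) v (by ring)]
  refine ⟨⟨le_trans ?_ a1.1, a1.2.trans ?_⟩, ⟨le_trans ?_ a2.1, a2.2.trans ?_⟩⟩
  · gcongr; exact min_le_left _ _
  · gcongr; exact le_max_left _ _
  · gcongr; exact min_le_right _ _
  · gcongr; exact le_max_right _ _

lemma Erk1_meas (k x : ℝ) : Measurable (fun v => Erk1 k x v) := by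
  unfold Erk1
  apply Measurable.const_mul
  simp_rw [intervalIntegral.integral_of_le (show (-1:ℝ) ≤ 1 by norm_num)]
  apply StronglyMeasurable.measurable
  apply StronglyMeasurable.integral_prod_right (f := fun v z =>
    Real.exp (z * x * v) * (1 - z) ^ (k - 1) * (1 + z) ^ k)
  apply Measurable.stronglyMeasurable
  unfold Function.uncurry
  fun_prop

lemma dbl_upper {F : ℝ → ℝ → ℝ} (hF : Measurable (Function.uncurry F)) {a b K : ℝ} (ha : 0 ≤ a)
    (hb : 0 ≤ b) {φ ψ : ℝ → ℝ} (hφ : IntervalIntegrable φ volume 0 a)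
    (hψ : IntervalIntegrable ψ volume 0 b)
    (h : ∀ s ∈ Set.Ioo 0 a, ∀ t ∈ Set.Ioo 0 b, 0 ≤ F s t ∧ F s t ≤ K * (φ s * ψ t)) :
    (∀ t ∈ Set.Ioo 0 b, IntervalIntegrable (fun s => F s t) volume 0 a) ∧
    IntervalIntegrable (fun t => ∫ s in (0:ℝ)..a, F s t) volume 0 b ∧
    ∫ t in (0:ℝ)..b, ∫ s in (0:ℝ)..a, F s t ≤
      K * ((∫ s in (0:ℝ)..a, φ s) * (∫ t in (0:ℝ)..b, ψ t)) := by
  have hi : ∀ t ∈ Set.Ioo 0 b, IntervalIntegrable (fun s => F s t) volume 0 a := by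
    intro t ht
    refine ii_mono ha (((hφ.mul_const (ψ t)).const_mul K)) ?_ (fun s hs => h s hs t ht)
    exact hF.comp (measurable_id.prodMk measurable_const)
  have hm : Measurable (fun t => ∫ s in (0:ℝ)..a, F s t) := by
    simp_rw [intervalIntegral.integral_of_le ha]
    exact (StronglyMeasurable.integral_prod_left (f := F) hF.stronglyMeasurable).measurable
  have hp : ∀ t ∈ Set.Ioo 0 b, 0 ≤ (∫ s in (0:ℝ)..a, F s t) ∧
      (∫ s in (0:ℝ)..a, F s t) ≤ (K * ∫ s in (0:ℝ)..a, φ s) * ψ t := by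
    intro t ht
    constructor
    · have := intervalIntegral.integral_mono_on_of_le_Ioo (f := fun _ => (0:ℝ)) ha (by simp) (hi t ht)
        (fun s hs => (h s hs t ht).1)
      simpa using this
    · have := intervalIntegral.integral_mono_on_of_le_Ioo ha (hi t ht)
        (((hφ.mul_const (ψ t)).const_mul K)) (fun s hs => (h s hs t ht).2)
      rw [intervalIntegral.integral_const_mul, intervalIntegral.integral_mul_const] at this
      linarith
  have hii := ii_mono hb (hψ.const_mul (K * ∫ s in (0:ℝ)..a, φ s)) hm hp
  refine ⟨hi, hii, ?_⟩
  have := intervalIntegral.integral_mono_on_of_le_Ioo hb hii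
    (hψ.const_mul (K * ∫ s in (0:ℝ)..a, φ s)) (fun t ht => (hp t ht).2)
  rw [intervalIntegral.integral_const_mul] at this
  linarith

lemma lower1 {f : ℝ → ℝ} {a u v c : ℝ} (hu : 0 < u) (huv : u ≤ v) (hv : v < a)
    (hf : IntervalIntegrable f volume 0 a) (h0 : ∀ x ∈ Set.Ioo 0 a, 0 ≤ f x)
    (h : ∀ x ∈ Set.Icc u v, c ≤ f x) : c * (v - u) ≤ ∫ x in (0:ℝ)..a, f x := by
  have hs : IntervalIntegrable f volume u v := by
    apply hf.mono_set
    rw [Set.uIcc_of_le huv, Set.uIcc_of_le (by linarith)]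
    exact Set.Icc_subset_Icc hu.le hv.le
  calc c * (v - u) = ∫ x in u..v, c := by simp; ring
    _ ≤ ∫ x in u..v, f x := intervalIntegral.integral_mono_on huv (by simp) hs h
    _ ≤ _ := by
      apply intervalIntegral.integral_mono_interval hu.le huv hv.le _ hf
      rw [Filter.EventuallyLE, ← restrict_Ioo_eq_restrict_Ioc]
      exact (ae_restrict_iff' measurableSet_Ioo).mpr (Filter.Eventually.of_forall fun x hx => h0 x hx)

/-- transformed integrand -/
noncomputable def FF (k x y L a b s t : ℝ) : ℝ :=
  ((a - s) * (a + t) * Erk1 k (-(x / 2)) (a - s + t) + s * t * Erk1 k (x / 2) (a - s + t))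
    * ((a + b - s) * (b - t)) * Real.exp ((x + 2 * y) * (L - s - t) / 2)
    * (s * (a + t) * (a - s) * t * (a + b - s) * (b - t)) ^ (k - 1)

/-- explicit comparison integrand -/
noncomputable def GG (k x y a b s t : ℝ) : ℝ :=
  Real.exp (-((x + y) * s)) * Real.exp (-(y * t)) * s ^ (k - 1) * t ^ (k - 1) * (a - s) ^ (k - 1)
    * ((a + t) ^ (k - 1) * ((a - s + t) * ((1 + x * (a - s + t)) ^ (k + 1))⁻¹))
    * (a + b - s) ^ k * (b - t) ^ k * (a + x * s * t)

lemma EkA2_eq (k x1 x2 x3 l1 l2 l3 : ℝ) :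
    EkA2 k x1 x2 x3 l1 l2 l3 =
    (3 * Real.Gamma (3 * k) / (Vlam l1 l2 l3 ^ (2 * k) * Real.Gamma k ^ 2)) *
      ∫ t in (0:ℝ)..(l2 - l3), ∫ s in (0:ℝ)..(l1 - l2),
        FF k (x2 - x1) (x1 - x3) (l1 + l2) (l1 - l2) (l2 - l3) s t := by
  unfold EkA2
  congr 1
  have h := fun f : ℝ → ℝ => intervalIntegral.integral_comp_sub_left (a := 0) (b := l2 - l3) f l2
  have h' := fun f : ℝ → ℝ => intervalIntegral.integral_comp_sub_left (a := 0) (b := l1 - l2) f l1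
  simp only [sub_sub_cancel, sub_zero] at h h'
  rw [← h]
  apply intervalIntegral.integral_congr
  intro t _
  simp only
  rw [← h']
  apply intervalIntegral.integral_congr
  intro s _
  simp only [FF, Wk]
  rw [show (x1 - x2) / 2 = -((x2 - x1) / 2) by ring, show -(x1 - x2) / 2 = (x2 - x1) / 2 by ring]
  rw [show l1 - s - (l2 - t) = l1 - l2 - s + t by ring]
  rw [show (x1 + x2 - 2 * x3) * (l1 - s + (l2 - t)) / 2
    = (x2 - x1 + 2 * (x1 - x3)) * (l1 + l2 - s - t) / 2 by ring]
  have e1 : l1 - s - l2 = l1 - l2 - s := by ring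
  have e2 : l1 - (l2 - t) = l1 - l2 + t := by ring
  have e3 : l1 - (l1 - s) = s := by ring
  have e4 : l2 - (l2 - t) = t := by ring
  have e5 : l1 - s - l3 = l1 - l2 + (l2 - l3) - s := by ring
  have e6 : l2 - t - l3 = l2 - l3 - t := by ring
  rw [e1, e2, e3, e4, e5, e6]

lemma FF_meas (k x y L a b : ℝ) :
    Measurable (Function.uncurry fun s t => FF k x y L a b s t) := by
  have h1 : Measurable fun p : ℝ × ℝ => Erk1 k (-(x / 2)) (a - p.1 + p.2) :=
    (Erk1_meas k _).comp (by fun_prop)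
  have h2 : Measurable fun p : ℝ × ℝ => Erk1 k (x / 2) (a - p.1 + p.2) :=
    (Erk1_meas k _).comp (by fun_prop)
  unfold FF Function.uncurry
  fun_prop

lemma FF_GG (k : ℝ) (hk : 0 < k) :
    ∃ c C : ℝ, 0 < c ∧ 0 < C ∧ ∀ x y L a b s t : ℝ, 0 ≤ x → 0 ≤ y → 0 < s → s < a → 0 < t → t < b →
      c * (Real.exp ((x / 2 + y) * L + x * a / 2) * GG k x y a b s t) ≤ FF k x y L a b s t ∧
      FF k x y L a b s t ≤ C * (Real.exp ((x / 2 + y) * L + x * a / 2) * GG k x y a b s t) := by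
  obtain ⟨c, C, hc, hC, h⟩ := rk1_est k hk
  refine ⟨c, C, hc, hC, fun x y L a b s t hx hy hs hsa ht htb => ?_⟩
  have hv : 0 < a - s + t := by linarith
  obtain ⟨⟨h1, h2⟩, h3, h4⟩ := h x (a - s + t) hx hv.le
  have p1 : 0 < a - s := by linarith
  have p2 : 0 < a + t := by linarith
  have p3 : 0 < a + b - s := by linarith
  have p4 : 0 < b - t := by linarith
  have pv : 0 < 1 + x * (a - s + t) := by positivity
  have key : ∀ D : ℝ, D * (Real.exp ((x / 2 + y) * L + x * a / 2) * GG k x y a b s t) =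
      ((a - s) * (a + t) * (D * (Real.exp (x * (a - s + t) / 2) * ((1 + x * (a - s + t)) ^ (k + 1))⁻¹))
       + s * t * (D * (Real.exp (x * (a - s + t) / 2) * ((1 + x * (a - s + t)) ^ k)⁻¹)))
    * ((a + b - s) * (b - t)) * Real.exp ((x + 2 * y) * (L - s - t) / 2)
    * (s * (a + t) * (a - s) * t * (a + b - s) * (b - t)) ^ (k - 1) := by
    intro D
    unfold GG
    have e1 : Real.exp ((x / 2 + y) * L + x * a / 2) * (Real.exp (-((x + y) * s)) * Real.exp (-(y * t)))
      = Real.exp (x * (a - s + t) / 2) * Real.exp ((x + 2 * y) * (L - s - t) / 2) := by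
      rw [← Real.exp_add, ← Real.exp_add, ← Real.exp_add]; congr 1; ring
    have e2 : (s * (a + t) * (a - s) * t * (a + b - s) * (b - t)) ^ (k - 1) =
      s ^ (k - 1) * (a + t) ^ (k - 1) * (a - s) ^ (k - 1) * t ^ (k - 1) * (a + b - s) ^ (k - 1)
        * (b - t) ^ (k - 1) := by
      rw [Real.mul_rpow (by positivity) (by positivity), Real.mul_rpow (by positivity) (by positivity),
        Real.mul_rpow (by positivity) (by positivity), Real.mul_rpow (by positivity) (by positivity),
        Real.mul_rpow (by positivity) (by positivity)]
    have e3 : (a + b - s) ^ k = (a + b - s) ^ (k - 1) * (a + b - s) := by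
      rw [← Real.rpow_add_one p3.ne', sub_add_cancel]
    have e4 : (b - t) ^ k = (b - t) ^ (k - 1) * (b - t) := by
      rw [← Real.rpow_add_one p4.ne', sub_add_cancel]
    have e5 : ((1 + x * (a - s + t)) ^ k)⁻¹ =
        ((1 + x * (a - s + t)) ^ (k + 1))⁻¹ * (1 + x * (a - s + t)) := by
      rw [Real.rpow_add_one pv.ne', mul_inv, inv_mul_cancel_right₀ pv.ne']
    rw [e2, e3, e4, e5]
    linear_combination D * (s ^ (k - 1) * (a + t) ^ (k - 1) * (a - s) ^ (k - 1) * t ^ (k - 1) *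
      (a + b - s) ^ (k - 1) * (b - t) ^ (k - 1)) * ((a + b - s) * (b - t)) *
      ((1 + x * (a - s + t)) ^ (k + 1))⁻¹ * (a - s + t) * (a + x * s * t) * e1
  rw [key, key]
  unfold FF
  constructor <;> gcongr

lemma alg_Q (a b x y : ℝ) (ha : 0 < a) (hb : 0 < b) (hx : 0 ≤ x) (hy : 0 ≤ y) :
    (a + b / (1 + b * y)) / (1 + x * (a + b / (1 + b * y))) * ((1 + a * x) * (1 + (a + b) * (x + y)))
      ≤ 2 * ((a + b) * (1 + a * (x + y))) ∧
    (a + b) * (1 + a * (x + y)) ≤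
    2 * ((a + b / (1 + b * y)) / (1 + x * (a + b / (1 + b * y))) *
      ((1 + a * x) * (1 + (a + b) * (x + y)))) := by
  have e : (a + b / (1 + b * y)) / (1 + x * (a + b / (1 + b * y))) =
      (a + b + a * b * y) / (1 + b * y + x * (a + b + a * b * y)) := by
    have : 0 < 1 + b * y := by positivity
    have h2 : 0 < 1 + b * y + x * (a + b + a * b * y) := by positivity
    have h3 : 0 < 1 + x * (a + b / (1 + b * y)) := by positivity
    rw [div_eq_div_iff h3.ne' h2.ne']
    field_simp
    ring
  rw [e]
  have h2 : 0 < 1 + b * y + x * (a + b + a * b * y) := by positivity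
  constructor
  · rw [div_mul_eq_mul_div, div_le_iff₀ h2, ← sub_nonneg]
    ring_nf
    positivity
  · rw [div_mul_eq_mul_div, ← mul_div_assoc, le_div_iff₀ h2, ← sub_nonneg]
    ring_nf
    positivity

set_option maxHeartbeats 2000000 in
lemma GG_upper (k : ℝ) (hk : 0 < k) :
    ∃ C : ℝ, 0 < C ∧ ∀ x y a b s t : ℝ, 0 ≤ x → 0 ≤ y → 0 < s → s < a → 0 < t → t < b →
      GG k x y a b s t ≤ C * ((a + b) ^ k * b ^ k *
        ((a + b / (1 + b * y)) / (1 + x * (a + b / (1 + b * y)))) ^ k *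
        ((a / (1 + a * x) * (Real.exp (-((x + y) / 2 * s)) * s ^ (k - 1) * (a - s) ^ (k - 1))
          + Real.exp (-((x + y) / 2 * s)) * s ^ (k + 1 - 1) * (a - s) ^ (k - 1)) *
          (Real.exp (-(y / 2 * t)) * t ^ (k - 1) * (b - t) ^ ((1:ℝ) - 1)))) := by
  obtain ⟨C1, hC1, h1⟩ := poly_exp (k + 1) (1/2) (by linarith) (by norm_num)
  obtain ⟨C2, hC2, h2⟩ := poly_exp k (1/2) hk (by norm_num)
  refine ⟨C1 * (2 ^ k * C2), by positivity, fun x y a b s t hx hy hs hsa ht htb => ?_⟩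
  have hv : 0 < a - s + t := by linarith
  have ha : 0 < a := by linarith
  have hb : 0 < b := by linarith
  have p1 : 0 < a - s := by linarith
  have p2 : 0 < a + t := by linarith
  have p3 : 0 < a + b - s := by linarith
  have p4 : 0 < b - t := by linarith
  have pv : 0 < 1 + x * (a - s + t) := by positivity
  have ps : 0 < 1 + x * s := by positivity
  have pt : 0 < 1 + x * (a + t) := by positivity
  have pT : 0 < 1 + b * y := by positivity
  set h := (a + b / (1 + b * y)) / (1 + x * (a + b / (1 + b * y))) with hh
  have e1 : (a - s + t) * ((1 + x * (a - s + t)) ^ (k + 1))⁻¹ ≤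
      (a + t) * ((1 + x * s) ^ (k + 1) * ((1 + x * (a + t)) ^ (k + 1))⁻¹) := by
    have i1 : a - s + t ≤ a + t := by linarith
    have i2 : (1 + x * (a + t)) ^ (k + 1) ≤ (1 + x * s) ^ (k + 1) * (1 + x * (a - s + t)) ^ (k + 1) := by
      rw [← Real.mul_rpow ps.le pv.le]
      apply Real.rpow_le_rpow pt.le _ (by linarith)
      have : 0 ≤ x * s * (x * (a - s + t)) := by positivity
      nlinarith
    have i3 : ((1 + x * (a - s + t)) ^ (k + 1))⁻¹ ≤
        (1 + x * s) ^ (k + 1) * ((1 + x * (a + t)) ^ (k + 1))⁻¹ := by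
      rw [← div_eq_mul_inv, le_div_iff₀ (by positivity), inv_mul_le_iff₀ (by positivity)]
      linarith
    gcongr
  have e2 : Real.exp (-((x + y) * s)) * (1 + x * s) ^ (k + 1) ≤
      C1 * Real.exp (-((x + y) / 2 * s)) := by
    have i1 : (1 + x * s) ^ (k + 1) ≤ C1 * Real.exp (1 / 2 * ((x + y) * s)) := by
      refine le_trans ?_ (h1 ((x + y) * s) (by positivity))
      apply Real.rpow_le_rpow ps.le _ (by linarith)
      nlinarith [mul_nonneg hy hs.le]
    calc _ ≤ Real.exp (-((x + y) * s)) * (C1 * Real.exp (1 / 2 * ((x + y) * s))) := by gcongr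
      _ = C1 * (Real.exp (-((x + y) * s)) * Real.exp (1 / 2 * ((x + y) * s))) := by ring
      _ = _ := by rw [← Real.exp_add]; congr 2; ring
  have e3 : Real.exp (-(y * t)) * (1 + y * t) ^ k ≤ C2 * Real.exp (-(y / 2 * t)) := by
    calc _ ≤ Real.exp (-(y * t)) * (C2 * Real.exp (1 / 2 * (y * t))) := by
          gcongr; exact h2 _ (by positivity)
      _ = C2 * (Real.exp (-(y * t)) * Real.exp (1 / 2 * (y * t))) := by ring
      _ = _ := by rw [← Real.exp_add]; congr 2; ring
  have e4 : (a + b - s) ^ k ≤ (a + b) ^ k := Real.rpow_le_rpow p3.le (by linarith) hk.le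
  have e4' : (b - t) ^ k ≤ b ^ k := Real.rpow_le_rpow p4.le (by linarith) hk.le
  have e5 : (1 + x * (a + t))⁻¹ * (a + x * s * t) ≤ a / (1 + a * x) + s := by
    have q1 : 0 < 1 + a * x := by positivity
    rw [inv_mul_le_iff₀ pt]
    have j1 : a ≤ (1 + x * (a + t)) * (a / (1 + a * x)) := by
      rw [← mul_div_assoc, le_div_iff₀ q1]
      have : 0 ≤ x * t * a := by positivity
      nlinarith
    have j2 : x * s * t ≤ (1 + x * (a + t)) * s := by
      have : 0 ≤ x * s * a := by positivity
      nlinarith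
    linarith
  have e6 : ((a + t) / (1 + x * (a + t))) ^ k ≤ 2 ^ k * ((1 + y * t) ^ k * h ^ k) := by
    have hh0 : 0 < h := by positivity
    rw [← Real.mul_rpow (by positivity) (by positivity), ← Real.mul_rpow (by positivity) (by positivity)]
    apply Real.rpow_le_rpow (by positivity) _ hk.le
    set T := b / (1 + b * y) with hT
    have hT0 : 0 < T := by positivity
    have tT : t ≤ (1 + y * t) * T := by
      rw [hT, ← mul_div_assoc, le_div_iff₀ pT]
      have : 0 ≤ b * y * t := by positivity
      nlinarith
    have hyt : 0 ≤ y * t := by positivity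
    have i1 : a + t ≤ (1 + y * t) * (a + T) := by nlinarith [mul_nonneg hyt ha.le]
    -- `a+t ≤ R (a+T)` with `R ≥ 1`
    have i2 : (a + t) / (1 + x * (a + t)) ≤ (1 + y * t) * h := by
      rw [hh, ← mul_div_assoc, div_le_div_iff₀ pt (by positivity)]
      have j : 0 ≤ y * t * ((a + T) * (x * (a + t))) := by positivity
      nlinarith
    nlinarith [mul_pos (show 0 < 1 + y * t by positivity) hh0]
  have e7 : (a + t) ^ (k - 1) * ((a + t) * ((1 + x * s) ^ (k + 1) * ((1 + x * (a + t)) ^ (k + 1))⁻¹)) =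
      (1 + x * s) ^ (k + 1) * ((a + t) / (1 + x * (a + t))) ^ k * (1 + x * (a + t))⁻¹ := by
    rw [Real.div_rpow p2.le pt.le, Real.rpow_add_one pt.ne',
      show (a + t) ^ k = (a + t) ^ (k - 1) * (a + t) by
        rw [← Real.rpow_add_one p2.ne', sub_add_cancel]]
    rw [mul_inv]
    ring
  have e8 : s ^ (k + 1 - 1) = s ^ (k - 1) * s := by
    rw [add_sub_cancel_right, ← Real.rpow_add_one hs.ne', sub_add_cancel]
  unfold GG
  calc _ ≤ Real.exp (-((x + y) * s)) * Real.exp (-(y * t)) * s ^ (k - 1) * t ^ (k - 1) * (a - s) ^ (k - 1)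
    * ((a + t) ^ (k - 1) * ((a + t) * ((1 + x * s) ^ (k + 1) * ((1 + x * (a + t)) ^ (k + 1))⁻¹)))
    * (a + b) ^ k * b ^ k * (a + x * s * t) := by gcongr
    _ = (Real.exp (-((x + y) * s)) * (1 + x * s) ^ (k + 1)) *
        (Real.exp (-(y * t)) * ((a + t) / (1 + x * (a + t))) ^ k) *
        ((1 + x * (a + t))⁻¹ * (a + x * s * t)) *
        (s ^ (k - 1) * t ^ (k - 1) * (a - s) ^ (k - 1) * (a + b) ^ k * b ^ k) := by rw [e7]; ring
    _ ≤ (C1 * Real.exp (-((x + y) / 2 * s))) *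
        (Real.exp (-(y * t)) * (2 ^ k * ((1 + y * t) ^ k * h ^ k))) *
        (a / (1 + a * x) + s) *
        (s ^ (k - 1) * t ^ (k - 1) * (a - s) ^ (k - 1) * (a + b) ^ k * b ^ k) := by gcongr
    _ = (C1 * Real.exp (-((x + y) / 2 * s))) *
        (2 ^ k * h ^ k * (Real.exp (-(y * t)) * (1 + y * t) ^ k)) *
        (a / (1 + a * x) + s) *
        (s ^ (k - 1) * t ^ (k - 1) * (a - s) ^ (k - 1) * (a + b) ^ k * b ^ k) := by ring
    _ ≤ (C1 * Real.exp (-((x + y) / 2 * s))) *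
        (2 ^ k * h ^ k * (C2 * Real.exp (-(y / 2 * t)))) *
        (a / (1 + a * x) + s) *
        (s ^ (k - 1) * t ^ (k - 1) * (a - s) ^ (k - 1) * (a + b) ^ k * b ^ k) := by gcongr
    _ = _ := by
      rw [e8, sub_self, Real.rpow_zero]; ring

set_option maxHeartbeats 2000000 in
lemma GG_lower (k : ℝ) (hk : 0 < k) :
    ∃ c : ℝ, 0 < c ∧ ∀ x y a b s t : ℝ, 0 ≤ x → 0 ≤ y → 0 < a → 0 < b →
      a / (2 * (1 + a * (x + y))) / 2 ≤ s → s ≤ a / (2 * (1 + a * (x + y))) →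
      b / (2 * (1 + b * y)) / 2 ≤ t → t ≤ b / (2 * (1 + b * y)) →
      c * (((a ^ k) ^ 2 * (b ^ k) ^ 2 * (a + b) ^ k *
        ((a + b / (1 + b * y)) / (1 + x * (a + b / (1 + b * y)))) ^ k *
        ((1 + a * (x + y)) ^ k)⁻¹ * ((1 + b * y) ^ k)⁻¹ * (1 + a * x)⁻¹) *
        ((a / (2 * (1 + a * (x + y))))⁻¹ * (b / (2 * (1 + b * y)))⁻¹)) ≤ GG k x y a b s t := by
  refine ⟨Real.exp (-1) * ((4 ^ k)⁻¹) ^ 3 * ((2 ^ k)⁻¹) ^ 3 * (1/64), by positivity,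
    fun x y a b s t hx hy ha hb hs1 hs2 ht1 ht2 => ?_⟩
  have pM : 0 < 1 + a * (x + y) := by positivity
  have pT : 0 < 1 + b * y := by positivity
  have px : 0 < 1 + a * x := by positivity
  set σ := a / (2 * (1 + a * (x + y))) with hσ
  set T := b / (1 + b * y) with hT
  have hτ : b / (2 * (1 + b * y)) = T / 2 := by rw [hT]; field_simp
  rw [hτ] at ht1 ht2 ⊢
  have hσ0 : 0 < σ := by positivity
  have hT0 : 0 < T := by positivity
  have eσ : σ * (2 * (1 + a * (x + y))) = a := by rw [hσ]; field_simp
  have eT : T * (1 + b * y) = b := by rw [hT]; field_simp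
  have hs0 : 0 < s := by linarith
  have ht0 : 0 < t := by linarith
  have hσa : σ ≤ a / 2 := by
    have : 0 ≤ σ * (a * (x + y)) := by positivity
    nlinarith
  have hTb : T ≤ b := by
    have : 0 ≤ T * (b * y) := by positivity
    nlinarith
  have hMs : (x + y) * s ≤ 1 / 2 := by
    have i1 : (x + y) * s ≤ (x + y) * σ := by gcongr
    have i2 : (x + y) * σ ≤ 1 / 2 := by
      rw [hσ, ← mul_div_assoc, div_le_iff₀ (by positivity)]; nlinarith
    linarith
  have hTy : y * T ≤ 1 := by
    rw [hT, ← mul_div_assoc, div_le_iff₀ (by positivity)]; nlinarith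
  have hyt : y * t ≤ 1 / 2 := by
    have i1 : y * t ≤ y * (T / 2) := by gcongr
    linarith
  have hv : 0 < a - s + t := by linarith
  have p1 : 0 < a - s := by linarith
  have p2 : 0 < a + t := by linarith
  have p3 : 0 < a + b - s := by linarith
  have p4 : 0 < b - t := by linarith
  have pv : 0 < 1 + x * (a - s + t) := by positivity
  have pH : 0 < 1 + x * (a + T) := by positivity
  have sub1 : ∀ z : ℝ, 0 < z → z ^ (k - 1) = z ^ k * z⁻¹ := fun z hz => by
    rw [Real.rpow_sub_one hz.ne', div_eq_mul_inv]
  have f0 : Real.exp (-1) ≤ Real.exp (-((x + y) * s)) * Real.exp (-(y * t)) := by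
    rw [← Real.exp_add]; apply Real.exp_le_exp.mpr; linarith
  have f1 : (σ / 2) ^ k * σ⁻¹ ≤ s ^ (k - 1) := by
    rw [sub1 s hs0]; gcongr
  have f2 : (T / 4) ^ k * (T / 2)⁻¹ ≤ t ^ (k - 1) := by
    rw [sub1 t ht0]; gcongr; linarith
  have f3 : (a / 2) ^ k * a⁻¹ ≤ (a - s) ^ (k - 1) := by
    rw [sub1 _ p1]; gcongr <;> linarith
  have f4 : ((a + b) / 2) ^ k ≤ (a + b - s) ^ k := by gcongr; linarith
  have f5 : (b / 2) ^ k ≤ (b - t) ^ k := by gcongr; linarith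
  have f6 : ((a + T) / 4) ^ k * (1 / 2) ≤ (a + t) ^ (k - 1) * (a - s + t) := by
    rw [sub1 _ p2, mul_assoc]
    gcongr
    · linarith
    · rw [inv_mul_eq_div, le_div_iff₀ p2]; linarith
  have f7 : ((1 + x * (a + T)) ^ (k + 1))⁻¹ ≤ ((1 + x * (a - s + t)) ^ (k + 1))⁻¹ := by
    gcongr <;> linarith
  have f8 : a * (1 / 32) * (1 + x * (a + T)) * (1 + a * x)⁻¹ ≤ a + x * s * t := by
    have i1 : a + x * (σ / 2) * (T / 4) ≤ a + x * s * t := by gcongr; linarith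
    refine le_trans ?_ i1
    rw [← div_eq_mul_inv, div_le_iff₀ px]
    have i2 : σ = a * (2 * (1 + a * (x + y)))⁻¹ := by rw [hσ, div_eq_mul_inv]
    have i3 : (1 + a * (x + y)) * (1 + x * (a + T)) ≤
        2 * ((16 * (1 + a * (x + y)) + x * T) * (1 + a * x)) := by
      have j1 : a * x * (y * T) ≤ a * x * 1 := by gcongr
      have q1 : 0 ≤ a * x := by positivity
      have q2 : 0 ≤ a * y := by positivity
      have q3 : 0 ≤ x * T := by positivity
      linarith [mul_nonneg q1 q2, mul_nonneg q1 q3, mul_nonneg q1 q1]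
    have i4 : (a + x * (σ / 2) * (T / 4)) =
        a * ((16 * (1 + a * (x + y)) + x * T) / (16 * (1 + a * (x + y)))) := by
      rw [hσ]; field_simp; ring
    rw [i4, mul_assoc, mul_assoc]
    apply mul_le_mul_of_nonneg_left _ ha.le
    rw [div_mul_eq_mul_div (16 * (1 + a * (x + y)) + x * T), le_div_iff₀ (by positivity)]
    linarith
  unfold GG
  have G0 : Real.exp (-1) * ((σ / 2) ^ k * σ⁻¹) * ((T / 4) ^ k * (T / 2)⁻¹) * ((a / 2) ^ k * a⁻¹) *
      ((((a + T) / 4) ^ k * (1 / 2)) * ((1 + x * (a + T)) ^ (k + 1))⁻¹) * ((a + b) / 2) ^ k *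
      (b / 2) ^ k * (a * (1 / 32) * (1 + x * (a + T)) * (1 + a * x)⁻¹) ≤
      Real.exp (-((x + y) * s)) * Real.exp (-(y * t)) * s ^ (k - 1) * t ^ (k - 1) * (a - s) ^ (k - 1)
    * ((a + t) ^ (k - 1) * (a - s + t) * ((1 + x * (a - s + t)) ^ (k + 1))⁻¹)
    * (a + b - s) ^ k * (b - t) ^ k * (a + x * s * t) := by gcongr
  rw [← mul_assoc ((a + t) ^ (k - 1))]
  refine le_trans (le_of_eq ?_) G0
  have g1 : (σ / 2) ^ k = a ^ k * (4 ^ k)⁻¹ * ((1 + a * (x + y)) ^ k)⁻¹ := by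
    rw [hσ, show a / (2 * (1 + a * (x + y))) / 2 = a / (4 * (1 + a * (x + y))) by field_simp; norm_num,
      Real.div_rpow ha.le (by positivity), Real.mul_rpow (by norm_num) pM.le, div_eq_mul_inv, mul_inv]
    ring
  have g2 : (T / 4) ^ k = b ^ k * (4 ^ k)⁻¹ * ((1 + b * y) ^ k)⁻¹ := by
    rw [Real.div_rpow hT0.le (by norm_num), hT, Real.div_rpow hb.le pT.le]
    simp only [div_eq_mul_inv]; ring
  rw [g1, g2, Real.div_rpow ha.le (by norm_num), Real.div_rpow hb.le (by norm_num),
    Real.div_rpow (show 0 ≤ a + b by positivity) (by norm_num),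
    Real.div_rpow (show 0 ≤ a + T by positivity) (show (0:ℝ) ≤ 4 by norm_num),
    Real.div_rpow (show 0 ≤ a + T by positivity) pH.le, Real.rpow_add_one pH.ne']
  have n1 : (1 + x * (a + T)) ^ k ≠ 0 := by positivity
  clear f0 f1 f2 f3 f4 f5 f6 f7 f8 G0 g1 g2
  generalize (1 + x * (a + T)) ^ k = z at *
  clear_value σ T
  field_simp
  try ring

/-- the common size of the double integral -/
noncomputable def QQ (k x y a b : ℝ) : ℝ :=
  (a ^ k) ^ 2 * (b ^ k) ^ 2 * (a + b) ^ k *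
        ((a + b / (1 + b * y)) / (1 + x * (a + b / (1 + b * y)))) ^ k *
        ((1 + a * (x + y)) ^ k)⁻¹ * ((1 + b * y) ^ k)⁻¹ * (1 + a * x)⁻¹

lemma int_bounds (k : ℝ) (hk : 0 < k) :
    ∃ c C : ℝ, 0 < c ∧ 0 < C ∧ ∀ x y L a b : ℝ, 0 ≤ x → 0 ≤ y → 0 < a → 0 < b →
      c * (Real.exp ((x / 2 + y) * L + x * a / 2) * QQ k x y a b) ≤
        ∫ t in (0:ℝ)..b, ∫ s in (0:ℝ)..a, FF k x y L a b s t ∧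
      ∫ t in (0:ℝ)..b, ∫ s in (0:ℝ)..a, FF k x y L a b s t ≤
        C * (Real.exp ((x / 2 + y) * L + x * a / 2) * QQ k x y a b) := by
  obtain ⟨c0, C0, hc0, hC0, hFG⟩ := FF_GG k hk
  obtain ⟨C1, hC1, hU⟩ := GG_upper k hk
  obtain ⟨c1, hc1, hL⟩ := GG_lower k hk
  obtain ⟨D1, hD1, hJ1⟩ := J_upper k k hk hk
  obtain ⟨D2, hD2, hJ2⟩ := J_upper (k + 1) k (by linarith) hk
  obtain ⟨D3, hD3, hJ3⟩ := J_upper k 1 hk one_pos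
  refine ⟨c0 * c1 / 4, C0 * C1 * ((D1 + D2) * D3), by positivity, by positivity,
    fun x y L a b hx hy ha hb => ?_⟩
  set E := Real.exp ((x / 2 + y) * L + x * a / 2) with hE
  have hE0 : 0 < E := Real.exp_pos _
  set h := (a + b / (1 + b * y)) / (1 + x * (a + b / (1 + b * y))) with hh
  have pM : 0 < 1 + a * (x + y) := by positivity
  have pT : 0 < 1 + b * y := by positivity
  have px : 0 < 1 + a * x := by positivity
  have hh0 : 0 < h := by positivity
  set φ : ℝ → ℝ := fun s =>
    a / (1 + a * x) * (Real.exp (-((x + y) / 2 * s)) * s ^ (k - 1) * (a - s) ^ (k - 1))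
          + Real.exp (-((x + y) / 2 * s)) * s ^ (k + 1 - 1) * (a - s) ^ (k - 1) with hφ
  set ψ : ℝ → ℝ := fun t =>
    Real.exp (-(y / 2 * t)) * t ^ (k - 1) * (b - t) ^ ((1:ℝ) - 1) with hψ
  have i1 := J_ii k k a ((x + y) / 2) hk hk ha (by positivity)
  have i2 := J_ii (k + 1) k a ((x + y) / 2) (by linarith) hk ha (by positivity)
  have iφ : IntervalIntegrable φ volume 0 a := (i1.const_mul _).add i2
  have iψ : IntervalIntegrable ψ volume 0 b := J_ii k 1 b (y / 2) hk one_pos hb (by positivity)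
  have hGG0 : ∀ s ∈ Set.Ioo 0 a, ∀ t ∈ Set.Ioo 0 b, 0 ≤ GG k x y a b s t := by
    intro s hs t ht
    have p0 := hs.1
    have p0' := ht.1
    have p1 : 0 < a - s := by linarith [hs.2]
    have p2 : 0 < a + t := by linarith
    have p3 : 0 < a + b - s := by linarith
    have p4 : 0 < b - t := by linarith [ht.2]
    have pv : 0 < a - s + t := by linarith
    unfold GG
    positivity
  have hF0 : ∀ s ∈ Set.Ioo 0 a, ∀ t ∈ Set.Ioo 0 b, 0 ≤ FF k x y L a b s t := by
    intro s hs t ht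
    refine le_trans ?_ (hFG x y L a b s t hx hy hs.1 hs.2 ht.1 ht.2).1
    have := hGG0 s hs t ht
    positivity
  obtain ⟨hi, hii, hup⟩ := dbl_upper (FF_meas k x y L a b) (K := C0 * E * C1 * ((a + b) ^ k * b ^ k * h ^ k))
    ha.le hb.le iφ iψ (by
      intro s hs t ht
      refine ⟨hF0 s hs t ht, ?_⟩
      refine (hFG x y L a b s t hx hy hs.1 hs.2 ht.1 ht.2).2.trans ?_
      have := hU x y a b s t hx hy hs.1 hs.2 ht.1 ht.2
      calc _ ≤ C0 * (E * (C1 * ((a + b) ^ k * b ^ k * h ^ k * (φ s * ψ t)))) := by gcongr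
        _ = _ := by ring)
  have ak : a ^ (k + k - 1) * a = (a ^ k) ^ 2 := by
    rw [← Real.rpow_add_one ha.ne', sub_add_cancel, Real.rpow_add ha]; ring
  constructor
  · -- lower bound
    set σ := a / (2 * (1 + a * (x + y))) with hσ
    set τ := b / (2 * (1 + b * y)) with hτ
    have hσ0 : 0 < σ := by positivity
    have hτ0 : 0 < τ := by positivity
    have hσa : σ < a := by
      rw [hσ, div_lt_iff₀ (by positivity)]
      have : 0 ≤ a * (a * (x + y)) := by positivity
      nlinarith
    have hτb : τ < b := by
      rw [hτ, div_lt_iff₀ (by positivity)]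
      have : 0 ≤ b * (b * y) := by positivity
      nlinarith
    have key := lower1 (f := fun t => ∫ s in (0:ℝ)..a, FF k x y L a b s t) (a := b) (u := τ / 2) (v := τ)
      (c := (c0 * (E * (c1 * (QQ k x y a b * (σ⁻¹ * τ⁻¹))))) * (σ - σ / 2))
      (by positivity) (by linarith) hτb hii ?_ ?_
    · refine le_trans (le_of_eq ?_) key
      field_simp
      norm_num
      ring
    · intro t ht
      have := intervalIntegral.integral_mono_on_of_le_Ioo (f := fun _ => (0:ℝ)) ha.le (by simp) (hi t ht)
        (fun s hs => hF0 s hs t ht)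
      simpa using this
    · intro t ht
      have ht' : t ∈ Set.Ioo 0 b := ⟨by linarith [ht.1], by linarith [ht.2]⟩
      refine lower1 (by positivity) (by linarith) hσa (hi t ht') (fun s hs => hF0 s hs t ht') ?_
      intro s hs
      have hs' : s ∈ Set.Ioo 0 a := ⟨by linarith [hs.1], by linarith [hs.2]⟩
      refine le_trans ?_ (hFG x y L a b s t hx hy hs'.1 hs'.2 ht'.1 ht'.2).1
      have := hL x y a b s t hx hy ha hb hs.1 hs.2 ht.1 ht.2
      gcongr
      exact this
  · refine hup.trans ?_
    have bφ : ∫ s in (0:ℝ)..a, φ s ≤ (D1 + D2) * ((a ^ k) ^ 2 * ((1 + a * (x + y)) ^ k)⁻¹ * (1 + a * x)⁻¹) := by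
      rw [hφ, intervalIntegral.integral_add (i1.const_mul _) i2, intervalIntegral.integral_const_mul]
      have b1 := hJ1 a (x + y) ha (by positivity)
      have b2 := hJ2 a (x + y) ha (by positivity)
      have b3 : D2 * (a ^ (k + 1 + k - 1) * ((1 + a * (x + y)) ^ (k + 1))⁻¹) ≤
          D2 * ((a ^ k) ^ 2 * ((1 + a * (x + y)) ^ k)⁻¹ * (1 + a * x)⁻¹) := by
        rw [show k + 1 + k - 1 = k + k by ring, Real.rpow_add ha, ← sq, Real.rpow_add_one pM.ne', mul_inv,
          mul_assoc ((a ^ k) ^ 2)]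
        gcongr
        linarith
      calc _ ≤ a / (1 + a * x) * (D1 * (a ^ (k + k - 1) * ((1 + a * (x + y)) ^ k)⁻¹)) +
            D2 * (a ^ (k + 1 + k - 1) * ((1 + a * (x + y)) ^ (k + 1))⁻¹) := by gcongr
        _ ≤ a / (1 + a * x) * (D1 * (a ^ (k + k - 1) * ((1 + a * (x + y)) ^ k)⁻¹)) +
            D2 * ((a ^ k) ^ 2 * ((1 + a * (x + y)) ^ k)⁻¹ * (1 + a * x)⁻¹) := by gcongr
        _ = _ := by rw [← ak]; ring
    have bψ : ∫ t in (0:ℝ)..b, ψ t ≤ D3 * (b ^ k * ((1 + b * y) ^ k)⁻¹) := by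
      have := hJ3 b y hb hy
      rwa [add_sub_cancel_right] at this
    have ψ0 : 0 ≤ ∫ t in (0:ℝ)..b, ψ t := by
      apply intervalIntegral.integral_nonneg hb.le
      intro t ht
      have h1 : 0 ≤ b - t := by linarith [ht.2]
      have h0 := ht.1
      simp only [hψ]
      positivity
    calc _ ≤ C0 * E * C1 * ((a + b) ^ k * b ^ k * h ^ k) *
          (((D1 + D2) * ((a ^ k) ^ 2 * ((1 + a * (x + y)) ^ k)⁻¹ * (1 + a * x)⁻¹)) *
            (D3 * (b ^ k * ((1 + b * y) ^ k)⁻¹))) := by gcongr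
      _ = _ := by unfold QQ; ring

lemma QQ_bounds (k : ℝ) (hk : 0 < k) (x y a b : ℝ) (hx : 0 ≤ x) (hy : 0 ≤ y) (ha : 0 < a) (hb : 0 < b) :
    (2 ^ k)⁻¹ * (((1 + a * x) ^ (k + 1) * (1 + b * y) ^ k * (1 + (a + b) * (x + y)) ^ k)⁻¹) ≤
      ((a * (a + b) * b) ^ (2 * k))⁻¹ * QQ k x y a b ∧
    ((a * (a + b) * b) ^ (2 * k))⁻¹ * QQ k x y a b ≤
    2 ^ k * (((1 + a * x) ^ (k + 1) * (1 + b * y) ^ k * (1 + (a + b) * (x + y)) ^ k)⁻¹) := by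
  obtain ⟨h1, h2⟩ := alg_Q a b x y ha hb hx hy
  unfold QQ
  set h := (a + b / (1 + b * y)) / (1 + x * (a + b / (1 + b * y))) with hh
  have pM : 0 < 1 + a * (x + y) := by positivity
  have pN : 0 < 1 + (a + b) * (x + y) := by positivity
  have pT : 0 < 1 + b * y := by positivity
  have px : 0 < 1 + a * x := by positivity
  have pab : 0 < a + b := by positivity
  have hh0 : 0 < h := by positivity
  have h1' := Real.rpow_le_rpow (by positivity) h1 hk.le
  have h2' := Real.rpow_le_rpow (by positivity) h2 hk.le
  rw [Real.mul_rpow hh0.le (by positivity), Real.mul_rpow px.le pN.le, Real.mul_rpow (by norm_num) (by positivity),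
    Real.mul_rpow pab.le pM.le] at h1'
  rw [Real.mul_rpow (show (0:ℝ) ≤ 2 by norm_num) (by positivity), Real.mul_rpow hh0.le (by positivity),
    Real.mul_rpow px.le pN.le, Real.mul_rpow pab.le pM.le] at h2'
  have e : ((a * (a + b) * b) ^ (2 * k)) = (a ^ k) ^ 2 * ((a + b) ^ k) ^ 2 * (b ^ k) ^ 2 := by
    rw [mul_comm 2 k, Real.rpow_mul (by positivity), Real.mul_rpow (by positivity) hb.le,
      Real.mul_rpow ha.le pab.le, Real.rpow_two]
    ring
  have eq : (((a * (a + b) * b) ^ (2 * k)))⁻¹ * ((a ^ k) ^ 2 * (b ^ k) ^ 2 * (a + b) ^ k * h ^ k *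
        ((1 + a * (x + y)) ^ k)⁻¹ * ((1 + b * y) ^ k)⁻¹ * (1 + a * x)⁻¹) =
      (h ^ k / ((a + b) ^ k * (1 + a * (x + y)) ^ k)) * (((1 + b * y) ^ k)⁻¹ * (1 + a * x)⁻¹) := by
    rw [e]
    have n1 : a ^ k ≠ 0 := by positivity
    have n2 : b ^ k ≠ 0 := by positivity
    have n3 : (a + b) ^ k ≠ 0 := by positivity
    have n4 : (1 + a * (x + y)) ^ k ≠ 0 := by positivity
    have n5 : (1 + b * y) ^ k ≠ 0 := by positivity
    generalize a ^ k = A at *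
    generalize b ^ k = B at *
    generalize (a + b) ^ k = D at *
    generalize (1 + a * (x + y)) ^ k = M at *
    generalize (1 + b * y) ^ k = N at *
    generalize h ^ k = H at *
    clear_value h
    field_simp
  rw [eq]
  have eT : ∀ c : ℝ, c * (((1 + a * x) ^ (k + 1) * (1 + b * y) ^ k * (1 + (a + b) * (x + y)) ^ k)⁻¹) =
      (c / ((1 + a * x) ^ k * (1 + (a + b) * (x + y)) ^ k)) * (((1 + b * y) ^ k)⁻¹ * (1 + a * x)⁻¹) := by
    intro c
    rw [Real.rpow_add_one px.ne']
    simp only [mul_inv, div_eq_mul_inv]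
    ring
  rw [eT, eT]
  constructor
  · apply mul_le_mul_of_nonneg_right _ (by positivity)
    rw [div_le_div_iff₀ (by positivity) (by positivity), inv_mul_le_iff₀ (by positivity)]
    exact h2'
  · apply mul_le_mul_of_nonneg_right _ (by positivity)
    rw [div_le_div_iff₀ (by positivity) (by positivity)]
    exact h1'.trans (le_of_eq (by ring))

/-- Theorem 4.1: sharp estimate of the `A₂` Dunkl kernel. -/
theorem estimate_C213 (k : ℝ) (hk : 0 < k) :
    ∃ C : ℝ, 0 < C ∧ ∀ l1 l2 l3 x1 x2 x3 : ℝ,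
      l1 + l2 + l3 = 0 →
      l2 < l1 →
      l3 < l2 →
      x1 + x2 + x3 = 0 →
      x1 ≤ x2 →
      x3 ≤ x1 →
      (C⁻¹ * (Real.exp (l1 * x2 + l2 * x1 + l3 * x3) /
          ((1 + (l1 - l2) * (x2 - x1)) ^ (k + 1) * (1 + (l2 - l3) * (x1 - x3)) ^ k
            * (1 + (l1 - l3) * (x2 - x3)) ^ k))
        ≤ EkA2 k x1 x2 x3 l1 l2 l3 ∧
      EkA2 k x1 x2 x3 l1 l2 l3
        ≤ C * (Real.exp (l1 * x2 + l2 * x1 + l3 * x3) /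
          ((1 + (l1 - l2) * (x2 - x1)) ^ (k + 1) * (1 + (l2 - l3) * (x1 - x3)) ^ k
            * (1 + (l1 - l3) * (x2 - x3)) ^ k))) := by
  obtain ⟨c, C, hc, hC, hI⟩ := int_bounds k hk
  have hg1 := Real.Gamma_pos_of_pos hk
  have hg3 := Real.Gamma_pos_of_pos (show 0 < 3 * k by linarith)
  set g := 3 * Real.Gamma (3 * k) / Real.Gamma k ^ 2 with hg
  have hg0 : 0 < g := by positivity
  set c' := g * c * (2 ^ k)⁻¹ with hc'
  set C' := g * C * 2 ^ k with hC'
  have hc0 : 0 < c' := by positivity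
  have hC0 : 0 < C' := by positivity
  refine ⟨max C' c'⁻¹, by positivity, ?_⟩
  intro l1 l2 l3 x1 x2 x3 hl h12 h23 hx hx12 hx31
  have ha : 0 < l1 - l2 := by linarith
  have hb : 0 < l2 - l3 := by linarith
  have hX : 0 ≤ x2 - x1 := by linarith
  have hY : 0 ≤ x1 - x3 := by linarith
  obtain ⟨i1, i2⟩ := hI (x2 - x1) (x1 - x3) (l1 + l2) (l1 - l2) (l2 - l3) hX hY ha hb
  obtain ⟨q1, q2⟩ := QQ_bounds k hk (x2 - x1) (x1 - x3) (l1 - l2) (l2 - l3) hX hY ha hb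
  have hV : Vlam l1 l2 l3 = (l1 - l2) * (l1 - l2 + (l2 - l3)) * (l2 - l3) := by unfold Vlam; ring
  have hexp : ((x2 - x1) / 2 + (x1 - x3)) * (l1 + l2) + (x2 - x1) * (l1 - l2) / 2 =
      l1 * x2 + l2 * x1 + l3 * x3 := by
    have : l3 = -l1 - l2 := by linarith
    rw [this]; ring
  rw [hexp] at i1 i2
  rw [EkA2_eq, hV]
  rw [show l1 - l2 + (l2 - l3) = l1 - l3 by ring] at *
  rw [show x2 - x1 + (x1 - x3) = x2 - x3 by ring] at *
  set E := Real.exp (l1 * x2 + l2 * x1 + l3 * x3)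
  have hE0 : 0 < E := Real.exp_pos _
  set I := ∫ t in (0:ℝ)..(l2 - l3), ∫ s in (0:ℝ)..(l1 - l2),
        FF k (x2 - x1) (x1 - x3) (l1 + l2) (l1 - l2) (l2 - l3) s t
  set Q := QQ k (x2 - x1) (x1 - x3) (l1 - l2) (l2 - l3)
  have hV0 : 0 < ((l1 - l2) * (l1 - l3) * (l2 - l3)) ^ (2 * k) := by
    have : 0 < l1 - l3 := by linarith
    positivity
  set V := ((l1 - l2) * (l1 - l3) * (l2 - l3)) ^ (2 * k)
  have hD0 : 0 < (1 + (l1 - l2) * (x2 - x1)) ^ (k + 1) * (1 + (l2 - l3) * (x1 - x3)) ^ k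
            * (1 + (l1 - l3) * (x2 - x3)) ^ k := by
    have : 0 < l1 - l3 := by linarith
    have : 0 ≤ x2 - x3 := by linarith
    positivity
  set D := (1 + (l1 - l2) * (x2 - x1)) ^ (k + 1) * (1 + (l2 - l3) * (x1 - x3)) ^ k
            * (1 + (l1 - l3) * (x2 - x3)) ^ k
  have eg : 3 * Real.Gamma (3 * k) / (V * Real.Gamma k ^ 2) * I = g * (V⁻¹ * I) := by
    rw [hg]; field_simp
  rw [eg]
  have hED : 0 < E / D := by positivity
  constructor
  · calc (max C' c'⁻¹)⁻¹ * (E / D) ≤ c' * (E / D) := by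
          gcongr
          rw [inv_le_comm₀ (by positivity) hc0]
          exact le_max_right _ _
      _ = g * (c * E * ((2 ^ k)⁻¹ * D⁻¹)) := by rw [hc', div_eq_mul_inv]; ring
      _ ≤ g * (c * E * (V⁻¹ * Q)) := by gcongr
      _ = g * (V⁻¹ * (c * (E * Q))) := by ring
      _ ≤ g * (V⁻¹ * I) := by gcongr
  · calc g * (V⁻¹ * I) ≤ g * (V⁻¹ * (C * (E * Q))) := by gcongr
      _ = g * (C * E * (V⁻¹ * Q)) := by ring
      _ ≤ g * (C * E * (2 ^ k * D⁻¹)) := by gcongr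
      _ = C' * (E / D) := by rw [hC', div_eq_mul_inv]; ring
      _ ≤ _ := by
          gcongr
          exact le_max_left _ _
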